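/- Let S = ⟨a_1, …, a_k⟩ be a numerical semigroup with minimal generators a_1 < ⋯ < a_k (k ≥ 3), let A = a_1 + ⋯ + a_k, g_1 = gcd{a_j : j ≠ 1}, and p = lcm(a_1, g_1 a_2, A). Then for all sufficiently large x ∈ S, Δ_∞(x + p) = Δ_∞(x); that is, the function x ↦ Δ_∞(x) is eventually periodic with period p. -/

import Mathlib

open Finset

/-- `Zfac a x`: the set of factorizations of `x` with respect to the generators `a`. -/
def Zfac {k : ℕ} (a : Fin k → ℕ) (x : ℕ) : Set (Fin k → ℕ) :=
  {z | ∑ j, z j * a j = x}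

/-- The `∞`-length of a factorization: the maximum coordinate. -/
def linf {k : ℕ} (z : Fin k → ℕ) : ℕ :=
  Finset.univ.sup z

/-- The `0`-length of a factorization: the size of its support. -/
def lzero {k : ℕ} (z : Fin k → ℕ) : ℕ :=
  (Finset.univ.filter fun i => z i ≠ 0).card

/-- `𝓛∞(x)`: the set of `∞`-lengths of factorizations of `x`. -/
def LinfSet {k : ℕ} (a : Fin k → ℕ) (x : ℕ) : Set ℕ :=
  linf '' Zfac a x

/-- `𝓛∞(x, i)`: `∞`-lengths of factorizations whose maximum coordinate is attained at `i`. -/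
def LinfSetI {k : ℕ} (a : Fin k → ℕ) (x : ℕ) (i : Fin k) : Set ℕ :=
  linf '' {z | z ∈ Zfac a x ∧ z i = linf z}

/-- `𝓛₀(x)`: the set of `0`-lengths of factorizations of `x`. -/
def LzeroSet {k : ℕ} (a : Fin k → ℕ) (x : ℕ) : Set ℕ :=
  lzero '' Zfac a x

/-- The set of differences between consecutive elements of a set `T ⊆ ℕ`. -/
def deltaSet (T : Set ℕ) : Set ℕ :=
  {d | ∃ u ∈ T, ∃ v ∈ T, u < v ∧ v - u = d ∧ ∀ t ∈ T, ¬(u < t ∧ t < v)}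

/-- `Δ∞(x)`. -/
def DeltaInf {k : ℕ} (a : Fin k → ℕ) (x : ℕ) : Set ℕ := deltaSet (LinfSet a x)

/-- `Δ∞(S) = ⋃ x ∈ S, Δ∞(x)` (for `x ∉ S` the contribution is empty). -/
def DeltaInfS {k : ℕ} (a : Fin k → ℕ) : Set ℕ := ⋃ x : ℕ, DeltaInf a x

/-- `Δ₀(x)`. -/
def DeltaZero {k : ℕ} (a : Fin k → ℕ) (x : ℕ) : Set ℕ := deltaSet (LzeroSet a x)

/-- `Δ₀(S) = ⋃ x ∈ S, Δ₀(x)` (for `x ∉ S` the contribution is empty). -/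
def DeltaZeroS {k : ℕ} (a : Fin k → ℕ) : Set ℕ := ⋃ x : ℕ, DeltaZero a x

/-- `a` is a system of minimal generators: no generator is a `ℕ`-combination of the others. -/
def MinimalGens {k : ℕ} (a : Fin k → ℕ) : Prop :=
  ∀ i : Fin k, ¬ ∃ z : Fin k → ℕ, z i = 0 ∧ ∑ j, z j * a j = a i

/-!
For large `x`, a number `m` is an `∞`-length of `x` if and only if, for some `i`, both `x - m * a i`
and `m * A - x` lie in the semigroup `S i` generated by the `a j` with `j ≠ i`. Outside a bounded
range, membership in `S i` means nonnegativity and divisibility by `g i = gcd {a j : j ≠ i}`, so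
consecutive lengths are governed by different conditions in different ranges of `m`:

* where `m * A` is close to `x`, only `m * A - x ∈ S i` matters, and this condition is preserved by
  `(x, m) ↦ (x + p, m + p / A)`;
* where `m * a₂` is close to `x`, the length set is described by `g₁ ∣ x - m * a₁` or
  `x - m * a₂ ∈ S₂`, and `(x, m) ↦ (x + p, m + p / a₂)` preserves this because `g₁ ∣ p / a₂`;
* where `m * a₂ > x`, only `x - m * a₁ ∈ S₁` matters, and this condition is preserved by
  `(x, m) ↦ (x + p, m + p / a₁)`;
* between the first two ranges, the lengths include the residue classes `g i ∣ x - m * a i` for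
  `i = 1, 2`, so a gap is at most `min (g₁, g₂)`; conversely, since `g₁` and `g₂` are coprime, each
  of these values is a gap for every large `x`, occurring where `m * a₂` is slightly below `x`.
-/

section Gaps

/-- `IsGap T u d`: the elements `u` and `u + d` of `T` are consecutive, so that `d ∈ Δ(T)`. Gaps of
subsets of `ℤ` replace `deltaSet`, as lengths will be translated by negative amounts. -/
structure IsGap (T : Set ℤ) (u d : ℤ) : Prop where
  pos : 0 < d
  left_mem : u ∈ T
  right_mem : u + d ∈ T
  notMem : ∀ t, u < t → t < u + d → t ∉ T

theorem IsGap.translate {T T' : Set ℤ} {u d s : ℤ} (hgap : IsGap T u d)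
    (hT : ∀ t, u ≤ t → t ≤ u + d → (t ∈ T ↔ t + s ∈ T')) : IsGap T' (u + s) d where
  pos := hgap.pos
  left_mem := (hT u le_rfl (by linarith [hgap.pos])).1 hgap.left_mem
  right_mem := by
    rw [add_right_comm]
    exact (hT (u + d) (by linarith [hgap.pos]) le_rfl).1 hgap.right_mem
  notMem t hut htu ht := by
    refine hgap.notMem (t - s) (by linarith) (by linarith) ((hT _ (by linarith) (by linarith)).2 ?_)
    rwa [sub_add_cancel]

theorem mem_deltaSet_iff_exists_isGap {T : Set ℕ} {d : ℕ} :
    d ∈ deltaSet T ↔ ∃ u, IsGap ((↑) '' T) u d := by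
  constructor
  · rintro ⟨u, hu, v, hv, huv, rfl, hgap⟩
    refine ⟨u, by omega, ⟨u, hu, rfl⟩, ⟨v, hv, by omega⟩, ?_⟩
    rintro _ hut htv ⟨t, ht, rfl⟩
    exact hgap t ht (by omega)
  · rintro ⟨_, hd, ⟨u, hu, rfl⟩, ⟨v, hv, hvd⟩, hgap⟩
    refine ⟨u, hu, v, hv, by omega, by omega, fun t ht ⟨hut, htv⟩ => ?_⟩
    exact hgap t (Int.ofNat_lt.2 hut) ((Int.ofNat_lt.2 htv).trans_eq hvd) ⟨t, ht, rfl⟩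

end Gaps

section Congruences

theorem dvd_sub_of_dvd_sub_mul {g a x m n : ℤ} (hga : IsCoprime g a) (hm : g ∣ x - m * a)
    (hn : g ∣ x - n * a) : g ∣ m - n := by
  refine hga.dvd_of_dvd_mul_right ?_
  convert dvd_sub hn hm using 1
  ring

theorem exists_dvd_sub_mul {g a : ℤ} (hg : 0 < g) (hga : IsCoprime g a) (c x : ℤ) :
    ∃ w, c < w ∧ w ≤ c + g ∧ g ∣ x - w * a := by
  obtain ⟨r, s, hrs⟩ := hga
  obtain ⟨z, hz₀, hzg, hz⟩ := Int.existsUnique_equiv (s * x - (c + 1)) hg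
  obtain ⟨q, hq⟩ := hz.dvd
  refine ⟨c + 1 + z, by omega, by omega, r * x + q * a, ?_⟩
  linear_combination a * hq - x * hrs

-- Solutions of the second congruence are `w + g' * n`; the first one then determines `n` mod `g`.
theorem exists_dvd_sub_mul_and_dvd_sub_mul {g g' a a' : ℤ} (hg : 0 < g) (hg' : 0 < g')
    (hgg' : IsCoprime g g') (hga : IsCoprime g a) (hga' : IsCoprime g' a') (c x x' : ℤ) :
    ∃ w, c < w ∧ w ≤ c + g * g' ∧ g ∣ x - w * a ∧ g' ∣ x' - w * a' := by
  obtain ⟨w, hcw, hwc, hw⟩ := exists_dvd_sub_mul hg' hga' c x'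
  obtain ⟨n, hn, hng, hdvd⟩ := exists_dvd_sub_mul hg (hgg'.mul_right hga) (-1) (x - w * a)
  refine ⟨w + g' * n, by nlinarith, by nlinarith, ?_, ?_⟩
  · have hsub : x - (w + g' * n) * a = x - w * a - n * (g' * a) := by ring
    rwa [hsub]
  · have hsub : x' - (w + g' * n) * a' = x' - w * a' - g' * (n * a') := by ring
    exact hsub ▸ dvd_sub hw (dvd_mul_right g' _)

end Congruences

/-- `S` consists of nonnegative multiples of `g` and contains all of those that are at least `F`,
as a semigroup whose generators have greatest common divisor `g` does. -/
structure HasConductor (S : Set ℤ) (g F : ℤ) : Prop where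
  nonneg : ∀ {y}, y ∈ S → 0 ≤ y
  dvd : ∀ {y}, y ∈ S → g ∣ y
  mem : ∀ {y}, F ≤ y → g ∣ y → y ∈ S

theorem HasConductor.mono {S : Set ℤ} {g F F' : ℤ} (hS : HasConductor S g F) (hF : F ≤ F') :
    HasConductor S g F' :=
  ⟨hS.nonneg, hS.dvd, fun hy => hS.mem (hF.trans hy)⟩

/-- The arithmetic of a generating set `a i` with sum `A`, where `S i` is the semigroup generated
by all `a j` with `j ≠ i` and `g i` their greatest common divisor. The bound `F` serves as a
conductor of every `S i`. -/
structure IsLengthSystem {ι : Type*} (S : ι → Set ℤ) (a g : ι → ℤ) (A F : ℤ) : Prop where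
  pos : ∀ i, 0 < a i
  lt_sum : ∀ i, a i < A
  gcd_pos : ∀ i, 0 < g i
  gcd_dvd : ∀ {i j}, j ≠ i → g i ∣ a j
  gcd_dvd_sub : ∀ i, g i ∣ A - a i
  isCoprime : ∀ i, IsCoprime (g i) (a i)
  conductor_nonneg : 0 ≤ F
  hasConductor : ∀ i, HasConductor (S i) (g i) F

/-- The candidates for the elements of `𝓛∞(x)`. If the maximum `m` of a factorization `z` of `x`
is attained at `i`, then `x - m * a i` is the sum of the other terms and `m * A - x` is the sum of
all `(m - z j) * a j`; both lie in `S i`. -/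
def modelLengths {ι : Type*} (S : ι → Set ℤ) (a : ι → ℤ) (A x : ℤ) : Set ℤ :=
  {m | ∃ i, x - m * a i ∈ S i ∧ m * A - x ∈ S i}

namespace IsLengthSystem

variable {ι : Type*} {S : ι → Set ℤ} {a g : ι → ℤ} {A F x m u d s : ℤ} {i i₁ i₂ : ι}

theorem sum_pos (h : IsLengthSystem S a g A F) (i : ι) : 0 < A :=
  (h.pos i).trans (h.lt_sum i)

theorem dvd_sub_mul_iff (h : IsLengthSystem S a g A F) :
    g i ∣ x - m * a i ↔ g i ∣ m * A - x := by
  have hdvd : g i ∣ m * (A - a i) := (h.gcd_dvd_sub i).mul_left m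
  have hsub : m * A - x = m * (A - a i) - (x - m * a i) := by ring
  rw [hsub, dvd_sub_right hdvd]

theorem le_mul_sum (h : IsLengthSystem S a g A F) (hm : m ∈ modelLengths S a A x) :
    x ≤ m * A := by
  obtain ⟨i, -, hi⟩ := hm
  linarith [(h.hasConductor i).nonneg hi]

theorem mem_of_dvd (h : IsLengthSystem S a g A F) (hdvd : g i ∣ x - m * a i)
    (hmi : m * a i + F ≤ x) (hmA : x + F ≤ m * A) : m ∈ modelLengths S a A x :=
  ⟨i, (h.hasConductor i).mem (by linarith) hdvd,
    (h.hasConductor i).mem (by linarith) (h.dvd_sub_mul_iff.1 hdvd)⟩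

section Regions

theorem mem_iff_of_mul_sum_le (h : IsLengthSystem S a g A F) (hm : m * A - x + F ≤ m) :
    m ∈ modelLengths S a A x ↔ ∃ i, m * A - x ∈ S i := by
  refine ⟨fun ⟨i, _, hi⟩ => ⟨i, hi⟩, fun ⟨i, hi⟩ => ⟨i, ?_, hi⟩⟩
  have hm₀ : 0 ≤ m := by linarith [(h.hasConductor i).nonneg hi, h.conductor_nonneg]
  refine (h.hasConductor i).mem ?_ (h.dvd_sub_mul_iff.2 ((h.hasConductor i).dvd hi))
  linarith [mul_le_mul_of_nonneg_left (Int.add_one_le_of_lt (h.lt_sum i)) hm₀]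

theorem mem_iff_of_abs_le (h : IsLengthSystem S a g A F) (h₁₂ : a i₁ < a i₂)
    (hlt : ∀ i, i ≠ i₁ → i ≠ i₂ → a i₂ < a i) (hm : |x - m * a i₂| + F < m) :
    m ∈ modelLengths S a A x ↔ g i₁ ∣ x - m * a i₁ ∨ x - m * a i₂ ∈ S i₂ := by
  have hF := h.conductor_nonneg
  have habs := abs_le.1 (le_refl |x - m * a i₂|)
  have hm₀ : 0 < m := by linarith [abs_nonneg (x - m * a i₂)]
  have hmA : x + F ≤ m * A := by
    linarith [mul_le_mul_of_nonneg_left (Int.add_one_le_of_lt (h.lt_sum i₂)) hm₀.le]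
  constructor
  · rintro ⟨i, hi, -⟩
    rcases eq_or_ne i i₁ with rfl | hi₁
    · exact Or.inl ((h.hasConductor i).dvd hi)
    rcases eq_or_ne i i₂ with rfl | hi₂
    · exact Or.inr hi
    · nlinarith [(h.hasConductor i).nonneg hi, hlt i hi₁ hi₂]
  · rintro (hdvd | hi₂)
    · exact h.mem_of_dvd hdvd (by nlinarith) hmA
    · have hS := h.hasConductor i₂
      exact ⟨i₂, hi₂, hS.mem (by linarith) (h.dvd_sub_mul_iff.1 (hS.dvd hi₂))⟩

theorem mem_iff_of_lt_mul (h : IsLengthSystem S a g A F)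
    (hlt : ∀ i, i ≠ i₁ → i ≠ i₂ → a i₂ < a i) (hFm : F ≤ m) (hm : x < m * a i₂) :
    m ∈ modelLengths S a A x ↔ x - m * a i₁ ∈ S i₁ := by
  have hm₀ : 0 ≤ m := h.conductor_nonneg.trans hFm
  constructor
  · rintro ⟨i, hi, -⟩
    rcases eq_or_ne i i₁ with rfl | hi₁
    · exact hi
    have hx := (h.hasConductor i).nonneg hi
    rcases eq_or_ne i i₂ with rfl | hi₂
    · linarith
    · nlinarith [hlt i hi₁ hi₂]
  · intro hi
    have hS := h.hasConductor i₁
    refine ⟨i₁, hi, hS.mem ?_ (h.dvd_sub_mul_iff.1 (hS.dvd hi))⟩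
    nlinarith [h.lt_sum i₂]

end Regions

section Gaps

theorem add_le_of_isGap (h : IsLengthSystem S a g A F) (hgap : IsGap (modelLengths S a A x) u d)
    {c : ℤ} (hc : u ≤ c) (hcA : x + F ≤ c * A) (hci : (c + g i) * a i + F ≤ x) :
    u + d ≤ c + g i := by
  obtain ⟨w, hcw, hwc, hdvd⟩ := exists_dvd_sub_mul (h.gcd_pos i) (h.isCoprime i) c x
  have hw : w ∈ modelLengths S a A x := by
    refine h.mem_of_dvd hdvd ?_ (by nlinarith [h.sum_pos i])
    nlinarith [mul_le_mul_of_nonneg_right hwc (h.pos i).le]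
  by_contra! hlt
  exact hgap.notMem w (hc.trans_lt hcw) (hwc.trans_lt hlt) hw

theorem isGap_add_of_mul_sum_le (h : IsLengthSystem S a g A F) (i : ι)
    (hgap : IsGap (modelLengths S a A x) u d) (hu : u * A ≤ x + F)
    (hC : 2 * F + (F + g i) * A ≤ u) (hC' : 2 * F + (F + g i) * A ≤ u + s) :
    IsGap (modelLengths S a A (x + A * s)) (u + s) d := by
  have hF := h.conductor_nonneg
  have hA := h.sum_pos i
  have hxA := h.le_mul_sum hgap.left_mem
  have hFg : 0 ≤ F + g i := by linarith [h.gcd_pos i]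
  have hd : u + d ≤ u + F + g i := by
    refine h.add_le_of_isGap hgap (by linarith) (by nlinarith) ?_
    have hFgA := mul_le_mul_of_nonneg_left (h.lt_sum i).le hFg
    have hu₀ : 0 ≤ u := by nlinarith
    nlinarith [mul_le_mul_of_nonneg_left (Int.add_one_le_of_lt (h.lt_sum i)) hu₀]
  refine hgap.translate fun t hut htu => ?_
  have htA : t * A - x + F ≤ 2 * F + (F + g i) * A := by
    nlinarith [mul_le_mul_of_nonneg_right (htu.trans hd) hA.le]
  have hshift : (t + s) * A - (x + A * s) = t * A - x := by ring
  rw [h.mem_iff_of_mul_sum_le (by linarith), h.mem_iff_of_mul_sum_le (by linarith), hshift]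

theorem isGap_add_of_mul_le (h : IsLengthSystem S a g A F) (h₁₂ : a i₁ < a i₂)
    (hlt : ∀ i, i ≠ i₁ → i ≠ i₂ → a i₂ < a i) (hgap : IsGap (modelLengths S a A x) u d)
    (huA : x + F ≤ u * A) {E : ℤ} (hE : 0 ≤ E) (hu : u * a i₂ ≤ x + E)
    (hud : x < (u + d) * a i₂ + F) (hC : 2 * F + E + g i₁ * A < u)
    (hC' : 2 * F + E + g i₁ * A < u + s) (hs : g i₁ ∣ s) :
    IsGap (modelLengths S a A (x + a i₂ * s)) (u + s) d := by
  have hF := h.conductor_nonneg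
  have hg := h.gcd_pos i₁
  have hA := h.sum_pos i₁
  have hgA : 0 ≤ g i₁ * A := by positivity
  have hd : u + d ≤ u + g i₁ := by
    refine h.add_le_of_isGap hgap le_rfl huA ?_
    nlinarith [mul_le_mul_of_nonneg_left (h.lt_sum i₁).le hg.le]
  have hda : d * a i₂ ≤ g i₁ * A :=
    mul_le_mul (by linarith) (h.lt_sum i₂).le (h.pos i₂).le hg.le
  refine hgap.translate fun t hut htu => ?_
  have habs : |x - t * a i₂| ≤ F + E + g i₁ * A := by
    have hlow := mul_le_mul_of_nonneg_right hut (h.pos i₂).le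
    have hupp := mul_le_mul_of_nonneg_right htu (h.pos i₂).le
    rw [abs_le]
    constructor <;> linarith
  have hshift₁ : x + a i₂ * s - (t + s) * a i₁ = x - t * a i₁ + s * (a i₂ - a i₁) := by ring
  have hshift₂ : x + a i₂ * s - (t + s) * a i₂ = x - t * a i₂ := by ring
  rw [h.mem_iff_of_abs_le h₁₂ hlt (by linarith),
    h.mem_iff_of_abs_le h₁₂ hlt (by rw [hshift₂]; linarith), hshift₁, hshift₂,
    dvd_add_left (hs.mul_right _)]

theorem isGap_add_of_lt_mul (h : IsLengthSystem S a g A F)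
    (hlt : ∀ i, i ≠ i₁ → i ≠ i₂ → a i₂ < a i) (hgap : IsGap (modelLengths S a A x) u d)
    (hu : x < u * a i₂) (hus : x + a i₁ * s < (u + s) * a i₂) (hFu : F ≤ u) (hFus : F ≤ u + s) :
    IsGap (modelLengths S a A (x + a i₁ * s)) (u + s) d := by
  refine hgap.translate fun t hut _ => ?_
  have hta := mul_le_mul_of_nonneg_right hut (h.pos i₂).le
  have hshift : x + a i₁ * s - (t + s) * a i₁ = x - t * a i₁ := by ring
  rw [h.mem_iff_of_lt_mul hlt (by linarith) (by linarith),
    h.mem_iff_of_lt_mul hlt (by linarith) (by linarith), hshift]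

theorem le_gcd_of_isGap (h : IsLengthSystem S a g A F)
    (hgap : IsGap (modelLengths S a A x) u d) (huA : x + F ≤ u * A)
    (hud : (u + d) * a i + F ≤ x) : d ≤ g i := by
  by_contra! hd
  refine absurd (h.add_le_of_isGap hgap le_rfl huA ?_) (by linarith)
  nlinarith [h.pos i]

theorem isGap_of_dvd (h : IsLengthSystem S a g A F) (h₁₂ : a i₁ < a i₂)
    (hlt : ∀ i, i ≠ i₁ → i ≠ i₂ → a i₂ < a i) (hd : 0 < d) (hd₁ : d ≤ g i₁) (hd₂ : d ≤ g i₂)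
    (hdvd₁ : g i₁ ∣ x - (u + d) * a i₁) (hdvd₂ : g i₂ ∣ x - u * a i₂)
    (hud : (u + d) * a i₂ + F ≤ x) (hu : x + F < u * a i₂ + u) (hu₀ : 0 ≤ u) :
    IsGap (modelLengths S a A x) u d := by
  have huA : x + F ≤ u * A := by nlinarith [h.lt_sum i₂]
  refine ⟨hd, h.mem_of_dvd hdvd₂ (by nlinarith [h.pos i₂]) huA,
    h.mem_of_dvd hdvd₁ (by nlinarith) (by nlinarith [h.sum_pos i₁]), ?_⟩
  rintro t hut htd ⟨i, hi, -⟩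
  rcases eq_or_ne i i₁ with rfl | hi₁
  · have := Int.le_of_dvd (by linarith)
      (dvd_sub_of_dvd_sub_mul (h.isCoprime i) hdvd₁ ((h.hasConductor i).dvd hi))
    linarith
  rcases eq_or_ne i i₂ with rfl | hi₂
  · have := Int.le_of_dvd (by linarith)
      (dvd_sub_of_dvd_sub_mul (h.isCoprime i) ((h.hasConductor i).dvd hi) hdvd₂)
    linarith
  · have hx := (h.hasConductor i).nonneg hi
    nlinarith [h.conductor_nonneg, hlt i hi₁ hi₂, h.pos i]

theorem exists_isGap_of_le_gcd (h : IsLengthSystem S a g A F) (h₁₂ : a i₁ < a i₂)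
    (hlt : ∀ i, i ≠ i₁ → i ≠ i₂ → a i₂ < a i) :
    ∃ N, ∀ x ≥ N, ∀ d, 0 < d → d ≤ g i₁ → d ≤ g i₂ → ∃ u, IsGap (modelLengths S a A x) u d := by
  obtain ⟨C, hC⟩ : ∃ C, C = F + g i₁ + g i₁ * g i₂ := ⟨_, rfl⟩
  refine ⟨(F + C * a i₂ + C) * a i₂, fun x hx d hd hd₁ hd₂ => ?_⟩
  have ha := h.pos i₂
  have hcop : IsCoprime (g i₁) (g i₂) :=
    (h.isCoprime i₂).symm.of_isCoprime_of_dvd_left (h.gcd_dvd (ne_of_apply_ne a h₁₂.ne'))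
  obtain ⟨u, hcu, huc, hdvd₁, hdvd₂⟩ := exists_dvd_sub_mul_and_dvd_sub_mul (h.gcd_pos i₁)
    (h.gcd_pos i₂) hcop (h.isCoprime i₁) (h.isCoprime i₂) (x / a i₂ - C) (x - d * a i₁) x
  have hq : F + C * a i₂ + C ≤ x / a i₂ := (Int.le_ediv_iff_mul_le ha).2 hx
  have hqx : x / a i₂ * a i₂ ≤ x := Int.ediv_mul_le x ha.ne'
  have hxq : x < x / a i₂ * a i₂ + a i₂ := Int.lt_ediv_add_one_mul_self x ha |>.trans_eq (by ring)
  have hCpos : 0 ≤ C := by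
    have := mul_pos (h.gcd_pos i₁) (h.gcd_pos i₂)
    linarith [h.conductor_nonneg, h.gcd_pos i₁]
  refine ⟨u, h.isGap_of_dvd h₁₂ hlt hd hd₁ hd₂ ?_ hdvd₂ ?_ ?_ ?_⟩
  · convert hdvd₁ using 1
    ring
  · nlinarith [h.conductor_nonneg]
  · nlinarith
  · nlinarith [h.conductor_nonneg]

theorem exists_isGap_add (h : IsLengthSystem S a g A F) (h₁₂ : a i₁ < a i₂)
    (hlt : ∀ i, i ≠ i₁ → i ≠ i₂ → a i₂ < a i) {p : ℤ} (hpA : A ∣ p) (hp₁ : a i₁ ∣ p)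
    (hp₂ : g i₁ * a i₂ ∣ p) :
    ∃ N, ∀ x ≥ N, ∀ d, (∃ u, IsGap (modelLengths S a A x) u d) →
      ∃ u, IsGap (modelLengths S a A (x + p)) u d := by
  obtain ⟨N, hN⟩ := h.exists_isGap_of_le_gcd h₁₂ hlt
  obtain ⟨s₀, hs₀⟩ := hpA
  obtain ⟨s₁, hs₁⟩ := hp₁
  obtain ⟨s₂, hs₂⟩ := hp₂
  have hF := h.conductor_nonneg
  have hA := h.sum_pos i₁
  have hFg : 0 ≤ (F + g i₁) * A := mul_nonneg (by linarith [h.gcd_pos i₁]) hA.le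
  have hE : 0 ≤ |s₁| * A := by positivity
  obtain ⟨M, hM⟩ : ∃ M, M = 2 * F + (F + g i₁) * A + |s₁| * A + |s₀| + |s₁| + |g i₁ * s₂| + 1 :=
    ⟨_, rfl⟩
  have hs₀' := abs_le.1 (le_refl |s₀|)
  have hs₁' := abs_le.1 (le_refl |s₁|)
  have hs₂' := abs_le.1 (le_refl |g i₁ * s₂|)
  refine ⟨max (M * A) (N - p), fun x hx d ⟨u, hgap⟩ => ?_⟩
  have hMu : M ≤ u :=
    le_of_mul_le_mul_right ((le_max_left _ _).trans (hx.trans (h.le_mul_sum hgap.left_mem))) hA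
  rcases le_or_gt (u * A) (x + F) with huA | huA
  · exact ⟨_, hs₀ ▸ h.isGap_add_of_mul_sum_le i₁ hgap huA (by linarith) (by linarith)⟩
  rcases le_or_gt ((u + d) * a i₂ + F) x with hud | hud
  · have hud₁ : (u + d) * a i₁ + F ≤ x := by nlinarith [hgap.pos]
    exact hN _ (by linarith [le_max_right (M * A) (N - p)]) d hgap.pos
      (h.le_gcd_of_isGap hgap huA.le hud₁) (h.le_gcd_of_isGap hgap huA.le hud)
  rcases le_or_gt (u * a i₂) (x + |s₁| * A) with hu | hu
  · have hs : p = a i₂ * (g i₁ * s₂) := by linear_combination hs₂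
    exact ⟨_, hs ▸ h.isGap_add_of_mul_le h₁₂ hlt hgap huA.le hE hu hud (by nlinarith)
      (by nlinarith) (dvd_mul_right _ _)⟩
  · have hs : -(s₁ * (a i₂ - a i₁)) ≤ |s₁| * A := by
      have := abs_nonneg s₁
      nlinarith [h.lt_sum i₂, h.pos i₁]
    exact ⟨_, hs₁ ▸ h.isGap_add_of_lt_mul hlt hgap (by linarith) (by linarith) (by linarith)
      (by linarith)⟩

end Gaps

end IsLengthSystem

section NatCombs

variable {ι : Type*} {s : Finset ι} {a : ι → ℕ}

/-- The semigroup generated by the `a j` with `j ∈ s`, regarded as a set of integers so that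
membership of a difference is meaningful when the difference is negative. -/
def natCombs (s : Finset ι) (a : ι → ℕ) : Set ℤ :=
  {y | ∃ z : ι → ℕ, ((∑ j ∈ s, z j * a j : ℕ) : ℤ) = y}

theorem exists_hasConductor_natCombs (s : Finset ι) (a : ι → ℕ) :
    ∃ F : ℕ, HasConductor (natCombs s a) (s.gcd a : ℕ) F := by
  obtain ⟨F, hF⟩ := Nat.exists_mem_closure_of_ge (a '' s)
  refine ⟨F, ?_, ?_, ?_⟩
  · rintro _ ⟨z, rfl⟩
    exact Int.natCast_nonneg _
  · rintro _ ⟨z, rfl⟩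
    exact Int.natCast_dvd_natCast.2 (dvd_sum fun j hj => (gcd_dvd hj).mul_left _)
  · intro y hy hdvd
    lift y to ℕ using (Int.natCast_nonneg F).trans hy
    have hgcd : Nat.setGcd (a '' s) ∣ s.gcd a :=
      dvd_gcd fun j hj => Nat.setGcd_dvd_of_mem (Set.mem_image_of_mem a hj)
    have hmem := hF y (by omega) (hgcd.trans (Int.natCast_dvd_natCast.1 hdvd))
    rw [← Submodule.span_nat_eq_addSubmonoidClosure, Submodule.mem_toAddSubmonoid,
      Submodule.mem_span_image_finset_iff_exists_fun'] at hmem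
    obtain ⟨z, hz⟩ := hmem
    exact ⟨z, congrArg Nat.cast hz⟩

theorem exists_sub_mul_mem_lt {S : Set ℤ} {g F B y : ℤ} (hS : HasConductor S g F) (hB : 0 < B)
    (hgB : g ∣ B) (hy : y ∈ S) : ∃ q : ℕ, y - q * B ∈ S ∧ y - q * B < F + B := by
  rcases lt_or_ge y F with hyF | hFy
  · exact ⟨0, by simpa using hy, by simpa using hyF.trans (lt_add_of_pos_right F hB)⟩
  have hq : 0 ≤ (y - F) / B := Int.ediv_nonneg (by linarith) hB.le
  have hmod : y - (y - F) / B * B = F + (y - F) % B := by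
    linarith [Int.emod_add_mul_ediv (y - F) B, mul_comm B ((y - F) / B)]
  refine ⟨((y - F) / B).toNat, ?_⟩
  rw [Int.toNat_of_nonneg hq]
  refine ⟨hS.mem ?_ (dvd_sub (hS.dvd hy) (hgB.mul_left _)), ?_⟩
  · linarith [Int.emod_nonneg (y - F) hB.ne']
  · linarith [Int.emod_lt_of_pos (y - F) hB]

theorem coeff_le_sum_mul (ha : ∀ j ∈ s, 0 < a j) (z : ι → ℕ) {j : ι} (hj : j ∈ s) :
    z j ≤ ∑ j ∈ s, z j * a j :=
  (Nat.le_mul_of_pos_right _ (ha j hj)).trans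
    (single_le_sum (f := fun j => z j * a j) (fun _ _ => Nat.zero_le _) hj)

theorem exists_le_sum_mul_eq_of_two_mul_le (hs : s.Nonempty) (ha : ∀ j ∈ s, 0 < a j) {F : ℤ}
    (hF : HasConductor (natCombs s a) (s.gcd a : ℕ) F) {m : ℕ}
    (hm : 2 * (F + (∑ j ∈ s, a j : ℕ)) ≤ m) {y : ℤ} (hy : y ∈ natCombs s a)
    (hym : 2 * y ≤ m * (∑ j ∈ s, a j : ℕ)) :
    ∃ z : ι → ℕ, (∀ j ∈ s, z j ≤ m) ∧ ((∑ j ∈ s, z j * a j : ℕ) : ℤ) = y := by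
  have hB : (0 : ℤ) < (∑ j ∈ s, a j : ℕ) := Int.natCast_pos.2 (sum_pos ha hs)
  have hgB : ((s.gcd a : ℕ) : ℤ) ∣ (∑ j ∈ s, a j : ℕ) :=
    Int.natCast_dvd_natCast.2 (dvd_sum fun j hj => gcd_dvd hj)
  obtain ⟨q, ⟨z, hz⟩, hlt⟩ := exists_sub_mul_mem_lt hF hB hgB hy
  have hq : 2 * (q : ℤ) ≤ m := by
    refine le_of_mul_le_mul_right ?_ hB
    linarith [hz ▸ Int.natCast_nonneg (∑ j ∈ s, z j * a j)]
  refine ⟨fun j => q + z j, fun j hj => ?_, ?_⟩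
  · have hzj : (z j : ℤ) ≤ y - q * (∑ j ∈ s, a j : ℕ) :=
      hz ▸ Int.ofNat_le.2 (coeff_le_sum_mul ha z hj)
    have hqz : ((q + z j : ℕ) : ℤ) ≤ m := by
      push_cast
      linarith
    exact Int.ofNat_le.1 hqz
  · simp only [add_mul, sum_add_distrib, ← mul_sum]
    push_cast at hz ⊢
    linarith

-- One of `y` and `m * B - y` is at most `m * B / 2`, and `z ↦ m - z` exchanges the two.
theorem exists_le_sum_mul_eq_iff (hs : s.Nonempty) (ha : ∀ j ∈ s, 0 < a j) {F : ℤ}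
    (hF : HasConductor (natCombs s a) (s.gcd a : ℕ) F) {m : ℕ}
    (hm : 2 * (F + (∑ j ∈ s, a j : ℕ)) ≤ m) {y : ℤ} :
    (∃ z : ι → ℕ, (∀ j ∈ s, z j ≤ m) ∧ ((∑ j ∈ s, z j * a j : ℕ) : ℤ) = y) ↔
      y ∈ natCombs s a ∧ m * (∑ j ∈ s, a j : ℕ) - y ∈ natCombs s a := by
  have hcompl (z : ι → ℕ) (hz : ∀ j ∈ s, z j ≤ m) :
      ((∑ j ∈ s, (m - z j) * a j : ℕ) : ℤ) =
        m * (∑ j ∈ s, a j : ℕ) - (∑ j ∈ s, z j * a j : ℕ) := by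
    rw [← Nat.cast_mul, mul_sum, eq_sub_iff_add_eq, ← Nat.cast_add, ← sum_add_distrib]
    refine congrArg _ (sum_congr rfl fun j hj => ?_)
    rw [← add_mul, Nat.sub_add_cancel (hz j hj)]
  constructor
  · rintro ⟨z, hzm, rfl⟩
    exact ⟨⟨z, rfl⟩, fun j => m - z j, hcompl z hzm⟩
  · rintro ⟨hy, hy'⟩
    rcases le_total (2 * y) (m * (∑ j ∈ s, a j : ℕ)) with hle | hle
    · exact exists_le_sum_mul_eq_of_two_mul_le hs ha hF hm hy hle
    · obtain ⟨z, hzm, hz⟩ :=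
        exists_le_sum_mul_eq_of_two_mul_le hs ha hF hm hy' (by linarith)
      exact ⟨fun j => m - z j, fun j _ => Nat.sub_le _ _, by rw [hcompl z hzm, hz]; ring⟩

theorem isLengthSystem_natCombs [Fintype ι] [DecidableEq ι] [Nontrivial ι] (ha : ∀ i, 0 < a i)
    (hgcd : univ.gcd a = 1) {F : ℕ}
    (hF : ∀ i, HasConductor (natCombs (univ.erase i) a) ((univ.erase i).gcd a : ℕ) F) :
    IsLengthSystem (fun i => natCombs (univ.erase i) a) (fun i => (a i : ℤ))
      (fun i => ((univ.erase i).gcd a : ℕ)) (∑ i, a i : ℕ) F := by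
  have hdvd {i j} (hj : j ≠ i) : (univ.erase i).gcd a ∣ a j :=
    gcd_dvd (mem_erase.2 ⟨hj, mem_univ j⟩)
  refine ⟨fun i => Int.natCast_pos.2 (ha i), fun i => ?_, fun i => ?_,
    fun hj => Int.natCast_dvd_natCast.2 (hdvd hj), fun i => ?_, fun i => ?_,
    Int.natCast_nonneg F, hF⟩
  · obtain ⟨j, hj⟩ := exists_ne i
    exact Int.ofNat_lt.2 (single_lt_sum hj (mem_univ i) (mem_univ j) (ha j) fun _ _ _ =>
      Nat.zero_le _)
  · obtain ⟨j, hj⟩ := exists_ne i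
    exact Int.natCast_pos.2 (Nat.pos_of_dvd_of_pos (hdvd hj) (ha j))
  · rw [← add_sum_erase univ a (mem_univ i), Nat.cast_add, add_sub_cancel_left]
    exact Int.natCast_dvd_natCast.2 (dvd_sum fun j hj => gcd_dvd hj)
  · rw [Nat.isCoprime_iff_coprime, Nat.coprime_comm, Nat.Coprime, ← hgcd,
      ← insert_erase (mem_univ i), gcd_insert, erase_insert (notMem_erase i univ)]
    rfl

end NatCombs

section Factorizations

variable {k : ℕ} {a : Fin k → ℕ}

theorem mem_LinfSet_iff_exists_le [Nonempty (Fin k)] {x m : ℕ} :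
    m ∈ LinfSet a x ↔ ∃ i, ∃ z : Fin k → ℕ, (∀ j ∈ univ.erase i, z j ≤ m) ∧
      m * a i + ∑ j ∈ univ.erase i, z j * a j = x := by
  constructor
  · rintro ⟨z, hz, rfl⟩
    obtain ⟨i, hi, hmax⟩ := exists_mem_eq_sup univ univ_nonempty z
    refine ⟨i, z, fun j _ => le_sup (mem_univ j), ?_⟩
    rw [linf, hmax, add_sum_erase _ (fun j => z j * a j) hi]
    exact hz
  · rintro ⟨i, z, hzm, hx⟩
    have hupd {j} (hj : j ∈ univ.erase i) : Function.update z i m j = z j :=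
      Function.update_of_ne (ne_of_mem_erase hj) m z
    refine ⟨Function.update z i m, ?_, le_antisymm (Finset.sup_le fun j _ => ?_) ?_⟩
    · rw [Zfac, Set.mem_ofPred_eq, ← add_sum_erase _ _ (mem_univ i), ← hx,
        Function.update_self]
      exact congrArg _ (sum_congr rfl fun j hj => by rw [hupd hj])
    · rcases eq_or_ne j i with rfl | hj
      · rw [Function.update_self]
      · have hj' := mem_erase.2 ⟨hj, mem_univ j⟩
        exact (hupd hj').trans_le (hzm j hj')
    · exact (Function.update_self i m z).ge.trans (le_sup (f := Function.update z i m) (mem_univ i))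

theorem le_mul_sum_of_mem_LinfSet {x m : ℕ} (hm : m ∈ LinfSet a x) : x ≤ m * ∑ i, a i := by
  obtain ⟨z, hz, rfl⟩ := hm
  rw [← show ∑ j, z j * a j = x from hz, mul_sum]
  exact sum_le_sum fun j hj => Nat.mul_le_mul_right _ (le_sup hj)

theorem mem_LinfSet_iff_mem_modelLengths [Nontrivial (Fin k)] (ha : ∀ i, 0 < a i) {F : ℤ}
    (hF : ∀ i, HasConductor (natCombs (univ.erase i) a) ((univ.erase i).gcd a : ℕ) F)
    {x m : ℕ} (hm : 2 * (F + (∑ i, a i : ℕ)) ≤ m) :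
    m ∈ LinfSet a x ↔ (m : ℤ) ∈
      modelLengths (fun i => natCombs (univ.erase i) a) (fun i => (a i : ℤ)) (∑ i, a i : ℕ) x := by
  rw [mem_LinfSet_iff_exists_le]
  refine exists_congr fun i => ?_
  have hsum : ((∑ j, a j : ℕ) : ℤ) = a i + (∑ j ∈ univ.erase i, a j : ℕ) := by
    rw [← add_sum_erase univ a (mem_univ i), Nat.cast_add]
  have hcompl : (m : ℤ) * (∑ j, a j : ℕ) - x =
      m * (∑ j ∈ univ.erase i, a j : ℕ) - (x - m * a i) := by
    rw [hsum]
    ring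
  have hne : (univ.erase i).Nonempty := by
    obtain ⟨j, hj⟩ := exists_ne i
    exact ⟨j, mem_erase.2 ⟨hj, mem_univ j⟩⟩
  rw [hcompl, ← exists_le_sum_mul_eq_iff hne (fun j _ => ha j) (hF i) (by linarith)]
  refine exists_congr fun z => and_congr_right fun _ => ?_
  rw [eq_sub_iff_add_eq', ← Nat.cast_mul, ← Nat.cast_add, Nat.cast_inj]

theorem image_LinfSet_eq_modelLengths [Nontrivial (Fin k)] (ha : ∀ i, 0 < a i)
    (hgcd : univ.gcd a = 1) {F : ℕ}
    (hF : ∀ i, HasConductor (natCombs (univ.erase i) a) ((univ.erase i).gcd a : ℕ) F)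
    {x : ℕ} (hx : 2 * (F + ∑ i, a i) * ∑ i, a i ≤ x) :
    (↑) '' LinfSet a x =
      modelLengths (fun i => natCombs (univ.erase i) a) (fun i => (a i : ℤ)) (∑ i, a i : ℕ) x := by
  have hA : 0 < ∑ i, a i := sum_pos (fun i _ => ha i) univ_nonempty
  have hlarge {m : ℕ} (hm : x ≤ m * ∑ i, a i) : 2 * ((F : ℤ) + (∑ i, a i : ℕ)) ≤ m := by
    exact_mod_cast le_of_mul_le_mul_right (hx.trans hm) hA
  ext m
  constructor
  · rintro ⟨m, hm, rfl⟩
    exact (mem_LinfSet_iff_mem_modelLengths ha hF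
      (hlarge (le_mul_sum_of_mem_LinfSet hm))).1 hm
  · intro hm
    have hxm := (isLengthSystem_natCombs ha hgcd hF).le_mul_sum hm
    have hm₀ : 0 ≤ m := nonneg_of_mul_nonneg_left ((Int.natCast_nonneg x).trans hxm)
      (Int.natCast_pos.2 hA)
    lift m to ℕ using hm₀
    exact ⟨m, (mem_LinfSet_iff_mem_modelLengths ha hF (hlarge (by exact_mod_cast hxm))).2 hm, rfl⟩

end Factorizations

section Periodicity

variable {k : ℕ} {a : Fin k → ℕ}

theorem exists_DeltaInf_add_eq (ha : ∀ i, 0 < a i) (hgcd : univ.gcd a = 1) {i₁ i₂ : Fin k}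
    (h₁₂ : a i₁ < a i₂) (hlt : ∀ i, i ≠ i₁ → i ≠ i₂ → a i₂ < a i) {p : ℕ}
    (hpA : ∑ i, a i ∣ p) (hp₁ : a i₁ ∣ p) (hp₂ : (univ.erase i₁).gcd a * a i₂ ∣ p) :
    ∃ N, ∀ x ≥ N, DeltaInf a (x + p) = DeltaInf a x := by
  have : Nontrivial (Fin k) := ⟨i₁, i₂, ne_of_apply_ne a h₁₂.ne⟩
  choose C hC using fun i => exists_hasConductor_natCombs (univ.erase i) a
  obtain ⟨F, hCF⟩ := Finite.exists_le C
  have hF i := (hC i).mono (Int.ofNat_le.2 (hCF i))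
  have h := isLengthSystem_natCombs ha hgcd hF
  have h₁₂' : (a i₁ : ℤ) < a i₂ := Int.ofNat_lt.2 h₁₂
  have hlt' (i) (hi₁ : i ≠ i₁) (hi₂ : i ≠ i₂) : (a i₂ : ℤ) < a i := Int.ofNat_lt.2 (hlt i hi₁ hi₂)
  have hpA' := Int.natCast_dvd_natCast.2 hpA
  have hp₁' := Int.natCast_dvd_natCast.2 hp₁
  have hp₂' : (((univ.erase i₁).gcd a : ℕ) : ℤ) * a i₂ ∣ p := by exact_mod_cast hp₂
  obtain ⟨N, hN⟩ := h.exists_isGap_add h₁₂' hlt' hpA' hp₁' hp₂'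
  obtain ⟨N', hN'⟩ := h.exists_isGap_add h₁₂' hlt' hpA'.neg_right hp₁'.neg_right hp₂'.neg_right
  refine ⟨max (2 * (F + ∑ i, a i) * ∑ i, a i) (max N N').toNat, fun x hx => Set.ext fun d => ?_⟩
  have hx' := (le_max_left _ _).trans hx
  have hNx := Int.toNat_le.1 ((le_max_right _ _).trans hx)
  rw [DeltaInf, DeltaInf, mem_deltaSet_iff_exists_isGap, mem_deltaSet_iff_exists_isGap,
    image_LinfSet_eq_modelLengths ha hgcd hF hx',
    image_LinfSet_eq_modelLengths ha hgcd hF (hx'.trans (Nat.le_add_right x p)), Nat.cast_add]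
  refine ⟨fun hgap => ?_, hN x (by omega) d⟩
  simpa only [add_neg_cancel_right] using hN' (x + p) (by omega) d hgap

theorem MinimalGens.pos (ha : MinimalGens a) (i : Fin k) : 0 < a i := by
  by_contra! hi
  exact ha i ⟨0, rfl, by simp [Nat.le_zero.1 hi]⟩

end Periodicity

theorem stmt_6_general (k : ℕ) (hk : 2 ≤ k) (a : Fin k → ℕ)
    (hmono : StrictMono a)
    (hpos : 0 < a ⟨0, by omega⟩)
    (hgcd : Finset.univ.gcd a = 1)
    (A : ℕ) (hA : A = ∑ i, a i)
    (g1 : ℕ) (hg1 : g1 = (Finset.univ.erase (⟨0, by omega⟩ : Fin k)).gcd a)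
    (p : ℕ) (hp : p = Nat.lcm (a ⟨0, by omega⟩) (Nat.lcm (g1 * a ⟨1, by omega⟩) A)) :
    ∃ N : ℕ, ∀ x : ℕ, N ≤ x → DeltaInf a (x + p) = DeltaInf a x := by
  subst hA hg1 hp
  have ha (i) : 0 < a i := hpos.trans_le (hmono.monotone (Fin.mk_le_of_le_val (Nat.zero_le i)))
  have hlt (i : Fin k) (hi₀ : i ≠ ⟨0, by omega⟩) (hi₁ : i ≠ ⟨1, by omega⟩) :
      a ⟨1, by omega⟩ < a i := by
    simp only [ne_eq, Fin.ext_iff] at hi₀ hi₁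
    exact hmono (Fin.mk_lt_of_lt_val (by omega))
  exact exists_DeltaInf_add_eq ha hgcd (hmono (Fin.mk_lt_mk.2 one_pos)) hlt
    ((Nat.dvd_lcm_right _ _).trans (Nat.dvd_lcm_right _ _)) (Nat.dvd_lcm_left _ _)
    ((Nat.dvd_lcm_left _ _).trans (Nat.dvd_lcm_right _ _))

/-- `Δ∞(x)` is eventually periodic in `x` with period `p = lcm(a₁, g₁a₂, A)`. -/
theorem stmt_6 (k : ℕ) (hk : 3 ≤ k) (a : Fin k → ℕ)
    (hmono : StrictMono a)
    (hgcd : Finset.univ.gcd a = 1)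
    (hmin : MinimalGens a)
    (A : ℕ) (hA : A = ∑ i, a i)
    (g1 : ℕ) (hg1 : g1 = (Finset.univ.erase (⟨0, by omega⟩ : Fin k)).gcd a)
    (p : ℕ) (hp : p = Nat.lcm (a ⟨0, by omega⟩) (Nat.lcm (g1 * a ⟨1, by omega⟩) A)) :
    ∃ N : ℕ, ∀ x : ℕ, N ≤ x → (Zfac a x).Nonempty →
      DeltaInf a (x + p) = DeltaInf a x := by
  obtain ⟨N, hN⟩ := stmt_6_general k (by omega) a hmono (hmin.pos _) hgcd A hA g1 hg1 p hp
  exact ⟨N, fun x hx _ => hN x hx⟩
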